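/- arXiv:2106.02265 — 2 statements merged into one kernel-verified Lean document; each statement's English description precedes it below -/
import Mathlib

section
/- Let F be a finite field of characteristic 2 with q = 2^k ≡ 1 or 4 (mod 15), and G = C_3 × D_10. Then the unit group U(FG) is isomorphic to C_2^{3k} ⋊ (C_{2^k−1}³ × GL(2,F)⁶). -/
theorem d5_aux (i j : ZMod 5) : (i.val + j.val) % 5 = (i+j).val % 5 ∧ (4 * i.val + j.val) % 5 = (j-i).val % 5 := by
  revert i j; decide

theorem pow_congr_mod {R : Type*} [Monoid R] (a : R) (n : ℕ) (h : a ^ n = 1) {x y : ℕ} (hxy : x % n = y % n) :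
    a ^ x = a ^ y := by
  rw [← Nat.div_add_mod x n, ← Nat.div_add_mod y n, pow_add, pow_add, pow_mul, pow_mul, h, hxy]; simp

theorem pow_swap {R : Type*} [Monoid R] (a b : R) (ha : a ^ 5 = 1) (hab : a * b * a = b) (n : ℕ) :
    a ^ n * b = b * a ^ (4 * n) := by
  have h1 : a * b = b * a ^ 4 := by
    calc a * b = a * b * a ^ 5 := by rw [ha, mul_one]
      _ = (a * b * a) * a ^ 4 := by rw [mul_assoc (a*b), ← pow_succ']
      _ = _ := by rw [hab]
  induction n with
  | zero => simp
  | succ n ih => rw [pow_succ, mul_assoc, h1, ← mul_assoc, ih, mul_assoc, ← pow_add]; congr 2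

/-- representation of D_10 from generators -/
def dihHom {R : Type*} [Monoid R] (a b : R) (ha : a ^ 5 = 1) (hb : b * b = 1) (hab : a * b * a = b) :
    DihedralGroup 5 →* R where
  toFun g := match g with
    | .r i => a ^ i.val
    | .sr i => b * a ^ i.val
  map_one' := by
    change a ^ (0 : ZMod 5).val = 1
    simp
  map_mul' := by
    rintro (i | i) (j | j)
    · change a ^ (i + j).val = a ^ i.val * a ^ j.val
      rw [← pow_add]; exact (pow_congr_mod a 5 ha (d5_aux i j).1).symm
    · change b * a ^ (j - i).val = a ^ i.val * (b * a ^ j.val)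
      rw [← mul_assoc, pow_swap a b ha hab, mul_assoc, ← pow_add]
      rw [pow_congr_mod a 5 ha (d5_aux i j).2]
    · change b * a ^ (i + j).val = b * a ^ i.val * a ^ j.val
      rw [mul_assoc, ← pow_add, pow_congr_mod a 5 ha (d5_aux i j).1]
    · change a ^ (j - i).val = b * a ^ i.val * (b * a ^ j.val)
      rw [mul_assoc, ← mul_assoc (a ^ _), pow_swap a b ha hab, mul_assoc, ← pow_add, ← mul_assoc, hb, one_mul]
      rw [pow_congr_mod a 5 ha (d5_aux i j).2]

/-- twisting by a character of C_3 -/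
def twHom {F R : Type*} [Field F] [Ring R] [Algebra F R] (t : F) (ht : t ^ 3 = 1) (f : DihedralGroup 5 →* R) :
    Multiplicative (ZMod 3) × DihedralGroup 5 →* R where
  toFun g := t ^ (g.1.toAdd.val) • f g.2
  map_one' := by simp
  map_mul' := by
    rintro ⟨i, x⟩ ⟨j, y⟩
    have h : ∀ i j : ZMod 3, (i.val + j.val) % 3 = (i+j).val % 3 := by decide
    simp only [Prod.mk_mul_mk, map_mul, toAdd_mul]
    rw [smul_mul_smul_comm, ← pow_add, pow_congr_mod t 3 ht (h _ _)]

theorem sum_dih {M : Type*} [AddCommMonoid M] (f : DihedralGroup 5 → M) :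
    ∑ d, f d = (f (.r 0) + f (.r 1) + f (.r 2) + f (.r 3) + f (.r 4)) +
      (f (.sr 0) + f (.sr 1) + f (.sr 2) + f (.sr 3) + f (.sr 4)) := by
  rw [← Equiv.sum_comp DihedralGroup.equivSum.symm f, Fintype.sum_sum_type]
  congr 1
  · exact Fin.sum_univ_five _
  · exact Fin.sum_univ_five _

set_option maxHeartbeats 2000000 in
theorem psi_inj {F : Type*} [Field F] (h2 : (2 : F) = 0) (w : F) (hw : w ^ 2 + w + 1 = 0)
    (f : DihedralGroup 5 →* DualNumber F) (g h : DihedralGroup 5 →* Matrix (Fin 2) (Fin 2) F)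
    (hf1 : ∀ i, f (.r i) = 1) (hf2 : ∀ i, f (.sr i) = 1 + DualNumber.eps)
    (hg1 : ∀ i, g (.r i) = !![0,1;1,w] ^ i.val) (hg2 : ∀ i, g (.sr i) = !![0,1;1,0] * !![0,1;1,w] ^ i.val)
    (hh1 : ∀ i, h (.r i) = !![0,1;1,w^2] ^ i.val) (hh2 : ∀ i, h (.sr i) = !![0,1;1,0] * !![0,1;1,w^2] ^ i.val)
    (b : DihedralGroup 5 → F)
    (e1 : ∑ d, b d • f d = 0) (e2 : ∑ d, b d • g d = 0) (e3 : ∑ d, b d • h d = 0) : b = 0 := by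
  have v0 : (0 : ZMod 5).val = 0 := rfl
  have v1 : (1 : ZMod 5).val = 1 := rfl
  have v2 : (2 : ZMod 5).val = 2 := rfl
  have v3 : (3 : ZMod 5).val = 3 := rfl
  have v4 : (4 : ZMod 5).val = 4 := rfl
  have hw2 : w ^ 2 = w + 1 := by linear_combination hw - (w+1) * h2
  have P (c : F) (hc : c ^ 2 = c + 1) :
     (!![0,1;1,c] : Matrix (Fin 2) (Fin 2) F) ^ 2 = !![1,c;c,c] ∧
     (!![0,1;1,c] : Matrix (Fin 2) (Fin 2) F) ^ 3 = !![c,c;c,1] ∧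
     (!![0,1;1,c] : Matrix (Fin 2) (Fin 2) F) ^ 4 = !![c,1;1,0] := by
    have a2 : (!![0,1;1,c] : Matrix (Fin 2) (Fin 2) F) ^ 2 = !![1,c;c,c] := by
      rw [pow_two, Matrix.mul_fin_two]
      congr! 3 <;> grind
    have a3 : (!![0,1;1,c] : Matrix (Fin 2) (Fin 2) F) ^ 3 = !![c,c;c,1] := by
      rw [pow_succ, a2, Matrix.mul_fin_two]
      congr! 3 <;> grind
    refine ⟨a2, a3, ?_⟩
    rw [pow_succ, a3, Matrix.mul_fin_two]
    congr! 3 <;> grind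
  obtain ⟨p2, p3, p4⟩ := P w hw2
  obtain ⟨q2, q3, q4⟩ := P (w^2) (by grind)
  rw [sum_dih] at e1 e2 e3
  simp only [hf1, hf2] at e1
  simp only [hg1, hg2, v0, v1, v2, v3, v4, p2, p3, p4, pow_zero, pow_one, mul_one, Matrix.mul_fin_two, Matrix.one_fin_two] at e2
  simp only [hh1, hh2, v0, v1, v2, v3, v4, q2, q3, q4, pow_zero, pow_one, mul_one, Matrix.mul_fin_two, Matrix.one_fin_two] at e3
  have d1 := congrArg TrivSqZeroExt.fst e1
  have d2 := congrArg TrivSqZeroExt.snd e1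
  have m1 := congrFun (congrFun e2 0) 0
  have m2 := congrFun (congrFun e2 0) 1
  have m3 := congrFun (congrFun e2 1) 0
  have m4 := congrFun (congrFun e2 1) 1
  have n1 := congrFun (congrFun e3 0) 0
  have n2 := congrFun (congrFun e3 0) 1
  have n3 := congrFun (congrFun e3 1) 0
  have n4 := congrFun (congrFun e3 1) 1
  simp at d1 d2 m1 m2 m3 m4 n1 n2 n3 n4
  clear e1 e2 e3 p2 p3 p4 q2 q3 q4 P hf1 hf2 hg1 hg2 hh1 hh2 v0 v1 v2 v3 v4 hw
  have key : ∀ d, b d = 0 := by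
    have a0 : b 1 = 0 := by grind
    have a1 : b (.r 1) = 0 := by grind
    have a2 : b (.r 2) = 0 := by grind
    have a3 : b (.r 3) = 0 := by grind
    have a4 : b (.r 4) = 0 := by grind
    have c0 : b (.sr 0) = 0 := by grind
    have c1 : b (.sr 1) = 0 := by grind
    have c2 : b (.sr 2) = 0 := by grind
    have c3 : b (.sr 3) = 0 := by grind
    have c4 : b (.sr 4) = 0 := by grind
    rintro (i | i) <;> fin_cases i <;> assumption
  exact funext key


/-- units of the dual numbers -/
def dualUnits (F : Type*) [Field F] : (DualNumber F)ˣ ≃* Fˣ × Multiplicative F where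
  toFun u := (Units.map (TrivSqZeroExt.fstHom F F F : DualNumber F →* F) u,
    Multiplicative.ofAdd (TrivSqZeroExt.snd (u : DualNumber F) * (TrivSqZeroExt.fst (u : DualNumber F))⁻¹))
  invFun p := 
    { val := TrivSqZeroExt.inl (p.1 : F) + TrivSqZeroExt.inr ((p.1 : F) * p.2.toAdd)
      inv := TrivSqZeroExt.inl ((p.1 : F)⁻¹) - TrivSqZeroExt.inr ((p.1 : F)⁻¹ * p.2.toAdd)
      val_inv := by
        ext
        · simp
        · simp
          field_simp
          ring
      inv_val := by
        ext
        · simp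
        · simp
          field_simp
          ring }
  left_inv u := by
    have hu : TrivSqZeroExt.fst (u : DualNumber F) ≠ 0 := 
      (Units.map (TrivSqZeroExt.fstHom F F F : DualNumber F →* F) u).ne_zero
    ext
    · simp
    · simp
      field_simp
  right_inv p := by
    ext
    · simp
    · simp
      field_simp
  map_mul' u v := by
    have hu : TrivSqZeroExt.fst (u : DualNumber F) ≠ 0 := 
      (Units.map (TrivSqZeroExt.fstHom F F F : DualNumber F →* F) u).ne_zero
    have hv : TrivSqZeroExt.fst (v : DualNumber F) ≠ 0 := 
      (Units.map (TrivSqZeroExt.fstHom F F F : DualNumber F →* F) v).ne_zero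
    refine Prod.ext (map_mul _ _ _) ?_
    apply Multiplicative.toAdd.injective
    simp
    field_simp
    ring

abbrev TT (F : Type*) [Field F] := DualNumber F × Matrix (Fin 2) (Fin 2) F × Matrix (Fin 2) (Fin 2) F

theorem finrank_TT (F : Type*) [Field F] : Module.finrank F (Fin 3 → TT F) = 30 := by
  have h1 : Module.finrank F (DualNumber F) = 2 :=
    (Module.finrank_prod (R:=F) (M:=F) (M':=F)).trans (by simp)
  have : Module.Finite F (DualNumber F) := inferInstanceAs (Module.Finite F (F × F))
  have : Module.Free F (DualNumber F) := inferInstanceAs (Module.Free F (F × F))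
  rw [Module.finrank_pi_fintype]
  simp [Module.finrank_prod, h1, Module.finrank_matrix]

theorem finrank_MA (F : Type*) [Field F] : 
    Module.finrank F (MonoidAlgebra F (Multiplicative (ZMod 3) × DihedralGroup 5)) = 30 := by
  rw [(MonoidAlgebra.coeffLinearEquiv F).finrank_eq, Module.finrank_finsupp_self]
  rw [Fintype.card_prod, DihedralGroup.card]
  rfl

theorem lift_tw {F R : Type*} [Field F] [Ring R] [Algebra F R] (t : F) (ht : t ^ 3 = 1) (f : DihedralGroup 5 →* R) 
    (x : MonoidAlgebra F (Multiplicative (ZMod 3) × DihedralGroup 5)) :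
    MonoidAlgebra.lift F R _ (twHom t ht f) x = ∑ d, (x.coeff (Multiplicative.ofAdd 0, d) + t * x.coeff (Multiplicative.ofAdd 1, d) +
      t ^ 2 * x.coeff (Multiplicative.ofAdd 2, d)) • f d := by
  rw [MonoidAlgebra.lift_apply, Finsupp.sum_fintype _ _ (by simp), Fintype.sum_prod_type_right]
  refine Finset.sum_congr rfl fun d _ => ?_
  have h : ∀ g : Multiplicative (ZMod 3) → R, ∑ i, g i = g (Multiplicative.ofAdd 0) + g (Multiplicative.ofAdd 1) + g (Multiplicative.ofAdd 2) := 
    fun g => Fin.sum_univ_three g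
  rw [h]
  have v0 : (0 : ZMod 3).val = 0 := rfl
  have v1 : (1 : ZMod 3).val = 1 := rfl
  have v2 : (2 : ZMod 3).val = 2 := rfl
  simp only [twHom, MonoidHom.coe_mk, OneHom.coe_mk, toAdd_ofAdd, v0, v1, v2, smul_smul, ← add_smul]
  congr 1
  ring

theorem exists_equiv (F : Type) [Field F] (h2 : (2 : F) = 0) (w : F) (hw : w ^ 2 + w + 1 = 0) :
    Nonempty (MonoidAlgebra F (Multiplicative (ZMod 3) × DihedralGroup 5) ≃* (Fin 3 → TT F)) := by
  have hw3 : w ^ 3 = 1 := by linear_combination (w - 1) * hw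
  have M (c : F) (hc : c ^ 2 = c + 1) : (!![0,1;1,c] : Matrix (Fin 2) (Fin 2) F) ^ 5 = 1 ∧
      (!![0,1;1,c] * !![0,1;1,0] * !![0,1;1,c] : Matrix (Fin 2) (Fin 2) F) = !![0,1;1,0] := by
    constructor
    · rw [show 5 = 2 + 2 + 1 from rfl, pow_add, pow_add, pow_two, pow_one]
      simp only [Matrix.mul_fin_two, Matrix.one_fin_two]
      congr! 3 <;> grind
    · simp only [Matrix.mul_fin_two]
      congr! 3 <;> grind
  have hS : (!![0,1;1,0] * !![0,1;1,0] : Matrix (Fin 2) (Fin 2) F) = 1 := by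
    simp [Matrix.one_fin_two]
  have hc1 : w ^ 2 = w + 1 := by linear_combination hw - (w+1) * h2
  have hc2 : (w ^ 2) ^ 2 = w ^ 2 + 1 := by grind
  have he : ((1 + DualNumber.eps) * (1 + DualNumber.eps) : DualNumber F) = 1 := by
    ext
    · simp
    · simp; linear_combination h2
  let f : DihedralGroup 5 →* DualNumber F := dihHom 1 (1 + DualNumber.eps) (by simp) he (by simp)
  let g := dihHom (!![0,1;1,w] : Matrix (Fin 2) (Fin 2) F) !![0,1;1,0] (M w hc1).1 hS (M w hc1).2
  let h := dihHom (!![0,1;1,w^2] : Matrix (Fin 2) (Fin 2) F) !![0,1;1,0] (M _ hc2).1 hS (M _ hc2).2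
  have ht (j : Fin 3) : (w ^ (j : ℕ)) ^ 3 = 1 := by rw [← pow_mul, mul_comm, pow_mul, hw3, one_pow]
  let Φ : MonoidAlgebra F (Multiplicative (ZMod 3) × DihedralGroup 5) →ₐ[F] (Fin 3 → TT F) :=
    AlgHom.pi fun j => 
      (MonoidAlgebra.lift F _ _ (twHom _ (ht j) f)).prod
        ((MonoidAlgebra.lift F _ _ (twHom _ (ht j) g)).prod (MonoidAlgebra.lift F _ _ (twHom _ (ht j) h)))
  have inj : Function.Injective Φ.toLinearMap := by
    rw [← LinearMap.ker_eq_bot, LinearMap.ker_eq_bot']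
    intro x hx
    have B (j : Fin 3) := by
      have hj := congrFun hx j
      have k1 : MonoidAlgebra.lift F _ _ (twHom _ (ht j) f) x = 0 := congrArg Prod.fst hj
      have k2 : MonoidAlgebra.lift F _ _ (twHom _ (ht j) g) x = 0 := congrArg (fun z => z.2.1) hj
      have k3 : MonoidAlgebra.lift F _ _ (twHom _ (ht j) h) x = 0 := congrArg (fun z => z.2.2) hj
      rw [lift_tw] at k1 k2 k3
      exact psi_inj h2 w hw f g h (fun i => one_pow _) 
        (fun i => (congrArg ((1 + DualNumber.eps) * ·) (one_pow i.val)).trans (mul_one _))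
        (fun i => rfl) (fun i => rfl) (fun i => rfl) (fun i => rfl) _ k1 k2 k3
    have hx0 : x.coeff = 0 := by
      ext ⟨i, d⟩
      have b0 := congrFun (B 0) d
      have b1 := congrFun (B 1) d
      have b2 := congrFun (B 2) d
      simp only [Fin.val_zero, Fin.val_one, Fin.val_two, pow_zero, pow_one, Pi.zero_apply] at b0 b1 b2
      clear B hx
      have a0 : x.coeff (Multiplicative.ofAdd 0, d) = 0 := by grind
      have a1 : x.coeff (Multiplicative.ofAdd 1, d) = 0 := by grind
      have a2 : x.coeff (Multiplicative.ofAdd 2, d) = 0 := by grind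
      have hi : i = Multiplicative.ofAdd 0 ∨ i = Multiplicative.ofAdd 1 ∨ i = Multiplicative.ofAdd 2 := by
        revert i; decide
      rcases hi with rfl | rfl | rfl <;> assumption
    exact (MonoidAlgebra.coeffLinearEquiv F).injective (by simpa using hx0)
  have : Module.Finite F (DualNumber F) := inferInstanceAs (Module.Finite F (F × F))
  have sur : Function.Surjective Φ.toLinearMap := 
    (LinearMap.injective_iff_surjective_of_finrank_eq_finrank 
      ((finrank_MA F).trans (finrank_TT F).symm)).1 inj
  exact ⟨(AlgEquiv.ofBijective Φ ⟨inj, sur⟩ : _ ≃* _)⟩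

/-- rearranging factors -/
def rearr (A B C : Type*) [Group A] [Group B] [Group C] :
    (Fin 3 → (A × B) × C × C) ≃* (Fin 3 → B) × (Fin 3 → A) × (Fin 6 → C) where
  toFun x := (fun i => (x i).1.2, fun i => (x i).1.1, fun i => 
    if h : i.val < 3 then (x ⟨i.val, h⟩).2.1 else (x ⟨i.val - 3, by omega⟩).2.2)
  invFun y := fun i => ((y.2.1 i, y.1 i), y.2.2 ⟨i.val, by omega⟩, y.2.2 ⟨i.val + 3, by omega⟩)
  left_inv x := by
    funext i
    simp
  right_inv y := by
    refine Prod.ext rfl (Prod.ext rfl (funext fun i => ?_))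
    by_cases h : i.val < 3
    · simp [h]
    · have : i.val - 3 + 3 = i.val := by omega
      simp [h, this]
  map_mul' x y := by
    refine Prod.ext rfl (Prod.ext rfl (funext fun i => ?_))
    by_cases h : i.val < 3 <;> simp [h]

theorem add_part (F : Type) [Field F] [Fintype F] (k : ℕ) 
    (hchar : CharP F 2) (hcard : Fintype.card F = 2 ^ k) :
    Nonempty ((Fin 3 → Multiplicative F) ≃* (Fin (3 * k) → Multiplicative (ZMod 2))) := by
  letI := ZMod.algebra F 2
  have hf : Module.finrank (ZMod 2) F = k := by
    have := Module.card_eq_pow_finrank (K := ZMod 2) (V := F)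
    rw [hcard, ZMod.card] at this
    exact (Nat.pow_right_injective le_rfl this).symm
  let e : (Fin 3 → F) ≃ₗ[ZMod 2] (Fin (3 * k) → ZMod 2) := LinearEquiv.ofFinrankEq _ _ (by
    rw [Module.finrank_pi_fintype]; simp [hf])
  exact ⟨{ toFun := fun x i => Multiplicative.ofAdd (e (fun j => (x j).toAdd) i)
           invFun := fun y j => Multiplicative.ofAdd (e.symm (fun i => (y i).toAdd) j)
           left_inv := fun x => by
             funext j
             exact congrFun (e.symm_apply_apply _) j
           right_inv := fun x => by
             funext j
             exact congrFun (e.apply_symm_apply _) j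
           map_mul' := fun x y => by
             funext i
             exact congrFun (map_add e (fun j => (x j).toAdd) (fun j => (y j).toAdd)) i }⟩



/-- For `F` a finite field with `2^k` elements, `2^k ≡ 1, 4 (mod 15)`, and
`G = C₃ × D₁₀`, the unit group of `FG` is isomorphic to
`C₂^(3k) ⋊ (C_{2^k-1}³ × GL(2,F)⁶)`. -/
theorem stmt_8 (F : Type) [Field F] [Fintype F] (k : ℕ) (hk : 0 < k)
    (hchar : CharP F 2) (hcard : Fintype.card F = 2 ^ k)
    (hq : 2 ^ k % 15 = 1 ∨ 2 ^ k % 15 = 4) :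
    let G := Multiplicative (ZMod 3) × DihedralGroup 5
    ∃ φ : ((Fin 3 → Multiplicative (ZMod (2 ^ k - 1)))
            × (Fin 6 → GL (Fin 2) F)) →*
          MulAut (Fin (3 * k) → Multiplicative (ZMod 2)),
      Nonempty ((MonoidAlgebra F G)ˣ ≃*
        (Fin (3 * k) → Multiplicative (ZMod 2)) ⋊[φ]
          ((Fin 3 → Multiplicative (ZMod (2 ^ k - 1))) × (Fin 6 → GL (Fin 2) F))) := by
  intro G
  have h2 : (2 : F) = 0 := CharTwo.two_eq_zero
  have hcu : Nat.card Fˣ = 2 ^ k - 1 := by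
    rw [Nat.card_units, Nat.card_eq_fintype_card, hcard]
  have : NeZero (2 ^ k - 1) := ⟨by
    have := Nat.one_lt_two_pow hk.ne'
    omega⟩
  obtain ⟨w, hw⟩ : ∃ w : F, w ^ 2 + w + 1 = 0 := by
    classical
    have : Fact (Nat.Prime 3) := ⟨Nat.prime_three⟩
    obtain ⟨u, hu⟩ := exists_prime_orderOf_dvd_card' (G := Fˣ) 3 (by rw [hcu]; omega)
    refine ⟨u, ?_⟩
    have h3 : (u : F) ^ 3 = 1 := by
      have := pow_orderOf_eq_one u
      rw [hu] at this
      rw [← Units.val_pow_eq_pow_val, this, Units.val_one]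
    have h1 : (u : F) - 1 ≠ 0 := by
      intro h
      have : u = 1 := Units.ext (sub_eq_zero.1 h)
      rw [this, orderOf_one] at hu
      omega
    exact (mul_eq_zero.1 (show ((u : F) - 1) * ((u : F) ^ 2 + u + 1) = 0 by linear_combination h3)).resolve_left h1
  obtain ⟨e⟩ := exists_equiv F h2 w hw
  obtain ⟨ea⟩ := add_part F k hchar hcard
  have c : Fˣ ≃* Multiplicative (ZMod (2 ^ k - 1)) := mulEquivOfCyclicCardEq (by 
    rw [hcu]; simp)
  refine ⟨1, ⟨(Units.mapEquiv e).trans (MulEquiv.piUnits.trans (MulEquiv.trans ?_ SemidirectProduct.mulEquivProd.symm))⟩⟩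
  have e1 : (TT F)ˣ ≃* (Fˣ × Multiplicative F) × GL (Fin 2) F × GL (Fin 2) F :=
    MulEquiv.prodUnits.trans (MulEquiv.prodCongr (dualUnits F) MulEquiv.prodUnits)
  exact (MulEquiv.piCongrRight fun _ => e1).trans ((rearr _ _ _).trans 
    (MulEquiv.prodCongr ea (MulEquiv.prodCongr (MulEquiv.piCongrRight fun _ => c) (MulEquiv.refl _))))
end

section
/- Let F be a finite field with 5^k elements and G = C_3 × D_10. Then V = 1 + J(FG) is isomorphic to an iterated semidirect product (C_5^{15k} ⋊ C_5^{6k}) ⋊ C_5^{3k}. -/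
/-- The matrices `[[a, b], [s c, d]]` with `a, d` modulo `s ^ 3` and `b, c` modulo `s ^ 2`. -/
@[ext] structure W10 (R : Type) where
  a0 : R
  a1 : R
  a2 : R
  b0 : R
  b1 : R
  c0 : R
  c1 : R
  d0 : R
  d1 : R
  d2 : R

namespace W10

variable {R : Type} [CommRing R]

instance : Zero (W10 R) := ⟨⟨0, 0, 0, 0, 0, 0, 0, 0, 0, 0⟩⟩
instance : One (W10 R) := ⟨⟨1, 0, 0, 0, 0, 0, 0, 1, 0, 0⟩⟩
instance : Add (W10 R) := ⟨fun x y => ⟨x.a0 + y.a0, x.a1 + y.a1, x.a2 + y.a2, x.b0 + y.b0,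
  x.b1 + y.b1, x.c0 + y.c0, x.c1 + y.c1, x.d0 + y.d0, x.d1 + y.d1, x.d2 + y.d2⟩⟩
instance : Neg (W10 R) := ⟨fun x => ⟨-x.a0, -x.a1, -x.a2, -x.b0, -x.b1, -x.c0, -x.c1,
  -x.d0, -x.d1, -x.d2⟩⟩
instance : Mul (W10 R) := ⟨fun x y =>
  ⟨x.a0 * y.a0,
   x.a0 * y.a1 + x.a1 * y.a0 + x.b0 * y.c0,
   x.a0 * y.a2 + x.a1 * y.a1 + x.a2 * y.a0 + x.b0 * y.c1 + x.b1 * y.c0,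
   x.a0 * y.b0 + x.b0 * y.d0,
   x.a0 * y.b1 + x.a1 * y.b0 + x.b0 * y.d1 + x.b1 * y.d0,
   x.c0 * y.a0 + x.d0 * y.c0,
   x.c0 * y.a1 + x.c1 * y.a0 + x.d0 * y.c1 + x.d1 * y.c0,
   x.d0 * y.d0,
   x.d0 * y.d1 + x.d1 * y.d0 + x.c0 * y.b0,
   x.d0 * y.d2 + x.d1 * y.d1 + x.d2 * y.d0 + x.c0 * y.b1 + x.c1 * y.b0⟩⟩

@[simp] lemma zero_def : (0 : W10 R) = ⟨0, 0, 0, 0, 0, 0, 0, 0, 0, 0⟩ := rfl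
@[simp] lemma one_def : (1 : W10 R) = ⟨1, 0, 0, 0, 0, 0, 0, 1, 0, 0⟩ := rfl
@[simp] lemma add_def (x y : W10 R) : x + y = ⟨x.a0 + y.a0, x.a1 + y.a1, x.a2 + y.a2,
  x.b0 + y.b0, x.b1 + y.b1, x.c0 + y.c0, x.c1 + y.c1, x.d0 + y.d0, x.d1 + y.d1, x.d2 + y.d2⟩ := rfl
@[simp] lemma neg_def (x : W10 R) : -x = ⟨-x.a0, -x.a1, -x.a2, -x.b0, -x.b1, -x.c0, -x.c1,
  -x.d0, -x.d1, -x.d2⟩ := rfl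
@[simp] lemma mul_def (x y : W10 R) : x * y =
  ⟨x.a0 * y.a0,
   x.a0 * y.a1 + x.a1 * y.a0 + x.b0 * y.c0,
   x.a0 * y.a2 + x.a1 * y.a1 + x.a2 * y.a0 + x.b0 * y.c1 + x.b1 * y.c0,
   x.a0 * y.b0 + x.b0 * y.d0,
   x.a0 * y.b1 + x.a1 * y.b0 + x.b0 * y.d1 + x.b1 * y.d0,
   x.c0 * y.a0 + x.d0 * y.c0,
   x.c0 * y.a1 + x.c1 * y.a0 + x.d0 * y.c1 + x.d1 * y.c0,
   x.d0 * y.d0,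
   x.d0 * y.d1 + x.d1 * y.d0 + x.c0 * y.b0,
   x.d0 * y.d2 + x.d1 * y.d1 + x.d2 * y.d0 + x.c0 * y.b1 + x.c1 * y.b0⟩ := rfl

instance : Ring (W10 R) where
  add_assoc x y z := by ext <;> simp <;> ring
  zero_add x := by ext <;> simp
  add_zero x := by ext <;> simp
  add_comm x y := by ext <;> simp <;> ring
  neg_add_cancel x := by ext <;> simp
  left_distrib x y z := by ext <;> simp <;> ring
  right_distrib x y z := by ext <;> simp <;> ring
  zero_mul x := by ext <;> simp
  mul_zero x := by ext <;> simp
  mul_assoc x y z := by ext <;> simp <;> ring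
  one_mul x := by ext <;> simp
  mul_one x := by ext <;> simp
  nsmul := nsmulRec
  zsmul := zsmulRec

@[simp] lemma sub_def (x y : W10 R) : x - y = ⟨x.a0 - y.a0, x.a1 - y.a1, x.a2 - y.a2,
    x.b0 - y.b0, x.b1 - y.b1, x.c0 - y.c0, x.c1 - y.c1, x.d0 - y.d0, x.d1 - y.d1, x.d2 - y.d2⟩ := by
  rw [sub_eq_add_neg]; ext <;> simp <;> ring

/-- Scalars. -/
def iota (R : Type) [CommRing R] : R →+* W10 R where
  toFun r := ⟨r, 0, 0, 0, 0, 0, 0, r, 0, 0⟩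
  map_one' := rfl
  map_zero' := rfl
  map_mul' x y := by ext <;> simp
  map_add' x y := by ext <;> simp

@[simp] lemma iota_apply (r : R) : iota R r = ⟨r, 0, 0, 0, 0, 0, 0, r, 0, 0⟩ := rfl

lemma iota_comm (r : R) (x : W10 R) : Commute (iota R r) x := by
  show _ * _ = _ * _
  ext <;> simp <;> ring

/-- Coordinates. -/
def equivFun : W10 R ≃ (Fin 10 → R) where
  toFun x := ![x.a0, x.a1, x.a2, x.b0, x.b1, x.c0, x.c1, x.d0, x.d1, x.d2]
  invFun f := ⟨f 0, f 1, f 2, f 3, f 4, f 5, f 6, f 7, f 8, f 9⟩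
  left_inv x := rfl
  right_inv f := by ext i; fin_cases i <;> rfl

lemma mem_jacobson (hR : Ideal.jacobson (⊥ : Ideal R) = ⊥) (x : W10 R) :
    x ∈ Ideal.jacobson (⊥ : Ideal (W10 R)) ↔ x.a0 = 0 ∧ x.d0 = 0 := by
  rw [Ideal.mem_jacobson_iff]
  constructor
  · intro h
    constructor
    · rw [← Ideal.mem_bot, ← hR, Ideal.mem_jacobson_iff]
      intro y
      obtain ⟨z, hz⟩ := h (iota R y)
      refine ⟨z.a0, ?_⟩
      have := congrArg W10.a0 ((Ideal.mem_bot).1 hz)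
      simpa using this
    · rw [← Ideal.mem_bot, ← hR, Ideal.mem_jacobson_iff]
      intro y
      obtain ⟨z, hz⟩ := h (iota R y)
      refine ⟨z.d0, ?_⟩
      have := congrArg W10.d0 ((Ideal.mem_bot).1 hz)
      simpa using this
  · rintro ⟨h1, h2⟩ y
    have hn : IsNilpotent (y * x) := by
      refine ⟨5, ?_⟩
      obtain ⟨n, hn⟩ : ∃ n, y * x = n := ⟨_, rfl⟩
      have ha : n.a0 = 0 := by rw [← hn]; simp [h1]
      have hd : n.d0 = 0 := by rw [← hn]; simp [h2]
      rw [hn, show n ^ 5 = n * n * (n * n) * n by noncomm_ring]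
      ext <;> simp [ha, hd]
    obtain ⟨u, hu⟩ := hn.isUnit_one_add
    refine ⟨(↑u⁻¹ : W10 R), ?_⟩
    rw [Ideal.mem_bot, sub_eq_zero, mul_assoc]
    have : (↑u⁻¹ : W10 R) * (1 + y * x) = 1 := by rw [← hu]; exact u.inv_mul
    rw [← this, mul_add, mul_one, add_comm]

/-- `exp(i T)`. -/
def rot (i : R) : W10 R := ⟨1, 3 * i ^ 2, 4 * i ^ 4, i, i ^ 3, i, i ^ 3, 1, 3 * i ^ 2, 4 * i ^ 4⟩

/-- The reflection. -/
def refl (R : Type) [CommRing R] : W10 R := ⟨1, 0, 0, 0, 0, 0, 0, -1, 0, 0⟩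

lemma rot_mul (h5 : (5 : R) = 0) (i j : R) : rot i * rot j = rot (i + j) := by
  have h1 : 3 * i ^ 2 + 3 * j ^ 2 + i * j = 3 * (i + j) ^ 2 := by
    linear_combination (-i * j) * h5
  have h2 : 4 * i ^ 4 + 4 * j ^ 4 + 9 * (i ^ 2 * j ^ 2) + i ^ 3 * j + i * j ^ 3
      = 4 * (i + j) ^ 4 := by
    linear_combination (-3 * i ^ 3 * j - 3 * i * j ^ 3 - 3 * i ^ 2 * j ^ 2) * h5
  ext <;> simp only [rot, mul_def] <;> try ring1
  · linear_combination h1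
  · linear_combination h2
  · linear_combination h1
  · linear_combination h2

lemma rot_refl (i : R) : rot i * refl R = refl R * rot (-i) := by
  ext <;> simp [rot, refl] <;> ring

lemma rot_zero : rot (0 : R) = 1 := by
  ext <;> simp [rot]

lemma refl_refl : refl R * refl R = 1 := by
  ext <;> simp [refl]

/-- The representation of the dihedral group. -/
def rho (h5 : (5 : R) = 0) (f : ZMod 5 →+* R) : DihedralGroup 5 →* W10 R where
  toFun g := match g with
    | .r i => rot (f i)
    | .sr i => refl R * rot (f i)
  map_one' := by
    show rot (f 0) = 1
    rw [map_zero, rot_zero]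
  map_mul' x y := by
    rcases x with i | i <;> rcases y with j | j
    · show rot (f (i + j)) = rot (f i) * rot (f j)
      rw [rot_mul h5, map_add]
    · show refl R * rot (f (j - i)) = rot (f i) * (refl R * rot (f j))
      rw [← mul_assoc, rot_refl, mul_assoc, rot_mul h5, map_sub, neg_add_eq_sub]
    · show refl R * rot (f (i + j)) = refl R * rot (f i) * rot (f j)
      rw [mul_assoc, rot_mul h5, map_add]
    · show rot (f (j - i)) = refl R * rot (f i) * (refl R * rot (f j))
      rw [mul_assoc, ← mul_assoc (rot (f i)), rot_refl, mul_assoc, rot_mul h5, map_sub,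
        neg_add_eq_sub, ← mul_assoc, refl_refl, one_mul]

/-- A subring containing the scalars, the rotation and the reflection is everything. -/
lemma subring_top (h5 : (5 : R) = 0) (S : Subring (W10 R)) (h1 : ∀ r, iota R r ∈ S)
    (h2 : refl R ∈ S) (h3 : ∀ i : ZMod 5, rot ((ZMod.cast i : ℤ) : R) ∈ S) (w : W10 R) : w ∈ S := by
  have hrot : ∀ i : ℤ, i = 1 ∨ i = 4 → rot (i : R) ∈ S := by
    rintro i (rfl | rfl)
    · exact h3 1
    · exact h3 4
  obtain ⟨T, hTd⟩ : ∃ T : W10 R, T = ⟨0, 0, 0, 1, 0, 1, 0, 0, 0, 0⟩ := ⟨_, rfl⟩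
  obtain ⟨U, hUd⟩ : ∃ T : W10 R, T = ⟨0, 0, 0, 1, 1, 1, 1, 0, 0, 0⟩ := ⟨_, rfl⟩
  obtain ⟨E, hEd⟩ : ∃ T : W10 R, T = ⟨1, 0, 0, 0, 0, 0, 0, 0, 0, 0⟩ := ⟨_, rfl⟩
  obtain ⟨D, hDd⟩ : ∃ T : W10 R, T = ⟨0, 0, 0, 0, 0, 0, 0, 1, 0, 0⟩ := ⟨_, rfl⟩
  have hE : E ∈ S := by
    have : E = iota R 3 * (1 + refl R) := by
      ext <;> simp [refl, hEd]
      linear_combination -h5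
    rw [this]
    exact S.mul_mem (h1 3) (S.add_mem S.one_mem h2)
  have hD : D ∈ S := by
    have : D = 1 - E := by
      ext <;> simp [hEd, hDd]
    rw [this]
    exact S.sub_mem S.one_mem hE
  have hU : U ∈ S := by
    have : U = iota R 3 * (rot ((1 : ℤ) : R) - rot ((4 : ℤ) : R)) := by
      ext <;> simp [rot, hUd] <;> ring_nf
      · linear_combination 27 * h5
      · linear_combination 612 * h5
      · linear_combination 2 * h5
      · linear_combination 38 * h5
      · linear_combination 2 * h5
      · linear_combination 38 * h5
      · linear_combination 27 * h5
      · linear_combination 612 * h5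
    rw [this]
    exact S.mul_mem (h1 3) (S.sub_mem (hrot _ (by simp)) (hrot _ (by simp)))
  have hT : T ∈ S := by
    have : T = U - U * U * U := by
      ext <;> simp [hTd, hUd]
    rw [this]
    exact S.sub_mem hU (S.mul_mem (S.mul_mem hU hU) hU)
  have hT2 := S.mul_mem hT hT
  have hT3 := S.mul_mem hT2 hT
  have hT4 := S.mul_mem hT3 hT
  have : w = iota R w.a0 * E + iota R w.a1 * (E * (T * T)) + iota R w.a2 * (E * (T * T * T * T))
      + iota R w.b0 * (E * T) + iota R w.b1 * (E * (T * T * T))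
      + iota R w.c0 * (D * T) + iota R w.c1 * (D * (T * T * T))
      + iota R w.d0 * D + iota R w.d1 * (D * (T * T)) + iota R w.d2 * (D * (T * T * T * T)) := by
    ext <;> simp [hTd, hEd, hDd]
  rw [this]
  have m := fun r {x} (hx : x ∈ S) => S.mul_mem (h1 r) hx
  refine S.add_mem (S.add_mem (S.add_mem (S.add_mem (S.add_mem (S.add_mem (S.add_mem (S.add_mem
    (S.add_mem (m _ hE) (m _ ?_)) (m _ ?_)) (m _ ?_)) (m _ ?_)) (m _ ?_)) (m _ ?_)) (m _ hD))
    (m _ ?_)) (m _ ?_) <;> apply S.mul_mem <;> assumption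

end W10

section Main
open W10

/-- Split extensions give semidirect products. -/
lemma split_equiv {N E Q : Type} [Group N] [Group E] [Group Q] (i : N →* E) (f : E →* Q)
    (g : Q →* E) (hi : Function.Injective i) (hr : ∀ x, f x = 1 → ∃ n, i n = x)
    (hfi : ∀ n, f (i n) = 1)
    (hfg : ∀ q, f (g q) = q) : ∃ φ : Q →* MulAut N, Nonempty (E ≃* N ⋊[φ] Q) := by
  let S : GroupExtension N E Q := ⟨i, f, hi, by
    ext x
    rw [MonoidHom.mem_ker, MonoidHom.mem_range]
    constructor
    · rintro ⟨n, rfl⟩; exact hfi n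
    · exact hr x, fun q => ⟨g q, hfg q⟩⟩
  let s : S.Splitting := ⟨g, hfg⟩
  exact ⟨s.conjAct, ⟨s.semidirectProductMulEquiv.symm⟩⟩

lemma elem_equiv (M : Type) [AddCommGroup M] (h5 : ∀ x : M, 5 • x = 0) (m : ℕ)
    (h : Nat.card M = 5 ^ m) :
    Nonempty ((Fin m → Multiplicative (ZMod 5)) ≃* Multiplicative M) := by
  letI : Module (ZMod 5) M := AddCommGroup.zmodModule h5
  have : Finite M := Nat.finite_of_card_ne_zero (by rw [h]; positivity)
  have : Fact (Nat.Prime 5) := ⟨by norm_num⟩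
  have hc := Module.natCard_eq_pow_finrank (K := ZMod 5) (V := M)
  rw [h, Nat.card_zmod] at hc
  have hm : m = Module.finrank (ZMod 5) M :=
    Nat.pow_right_injective (by norm_num : 2 ≤ 5) hc
  have e : (Fin m → ZMod 5) ≃ₗ[ZMod 5] M := LinearEquiv.ofFinrankEq _ _ (by simp [← hm])
  exact ⟨{ toFun := fun x => Multiplicative.ofAdd (e fun i => (x i).toAdd)
           invFun := fun y i => Multiplicative.ofAdd (e.symm y.toAdd i)
           left_inv := fun x => by ext i; simp
           right_inv := fun y => by simp
           map_mul' := fun x y => by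
            rw [← ofAdd_add, ← map_add]; rfl }⟩

lemma five_R (F : Type) [Field F] (hchar : CharP F 5) :
    (5 : MonoidAlgebra F (Multiplicative (ZMod 3))) = 0 := by
  have h5F : (5 : F) = 0 := by exact_mod_cast CharP.cast_eq_zero F 5
  have := congrArg (algebraMap F (MonoidAlgebra F (Multiplicative (ZMod 3)))) h5F
  rwa [map_ofNat, map_zero] at this

lemma card_MA (F G : Type) [Field F] [Finite F] [Finite G] :
    Nat.card (MonoidAlgebra F G) = Nat.card F ^ Nat.card G := by
  have : Fintype G := Fintype.ofFinite G
  have e : MonoidAlgebra F G ≃ (G → F) :=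
    (⟨fun x => x.coeff, fun x => ⟨x⟩, fun _ => rfl, fun _ => rfl⟩ :
      MonoidAlgebra F G ≃ (G →₀ F)).trans Finsupp.equivFunOnFinite
  rw [Nat.card_congr e, Nat.card_fun]

/-- The isomorphism of the group algebra with `W10`. -/
lemma exists_equiv_s14 (F : Type) [Field F] [Fintype F] (hchar : CharP F 5) :
    Nonempty (MonoidAlgebra F (Multiplicative (ZMod 3) × DihedralGroup 5) ≃+*
      W10 (MonoidAlgebra F (Multiplicative (ZMod 3)))) := by
  have h5 := five_R F hchar
  set R := MonoidAlgebra F (Multiplicative (ZMod 3)) with hR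
  let f : ZMod 5 →+* R := (algebraMap F R).comp (ZMod.castHom dvd_rfl F)
  let g : (Multiplicative (ZMod 3) × DihedralGroup 5) →* W10 R :=
    MonoidHom.noncommCoprod ((iota R : R →* W10 R).comp (MonoidAlgebra.of F _)) (rho h5 f)
      (fun x y => iota_comm _ _)
  let Φ : MonoidAlgebra F (Multiplicative (ZMod 3) × DihedralGroup 5) →+* W10 R :=
    MonoidAlgebra.liftNCRingHom ((iota R).comp (algebraMap F R)) g (fun x y => iota_comm _ _)
  have hsingle : ∀ x r, Φ (MonoidAlgebra.single x r) = iota R (algebraMap F R r) * g x := by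
    intro x r
    simp only [Φ]
    erw [MonoidAlgebra.liftNC_single]
    rfl
  have hof : ∀ x, Φ (MonoidAlgebra.of F _ x) = g x := by
    intro x
    rw [MonoidAlgebra.of_apply, hsingle, map_one, map_one, one_mul]
  have hg : ∀ x y, g (x, y) = iota R (MonoidAlgebra.of F _ x) * rho h5 f y := fun x y => rfl
  have hsurj : Function.Surjective Φ := by
    intro w
    apply subring_top h5 Φ.range
    · intro r
      have : (Φ.comp (MonoidAlgebra.mapDomainRingHom F
          (MonoidHom.inl (Multiplicative (ZMod 3)) (DihedralGroup 5)))) = iota R := by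
        apply MonoidAlgebra.ringHom_ext
        · intro r
          rw [RingHom.comp_apply, MonoidAlgebra.mapDomainRingHom_apply,
            MonoidAlgebra.mapDomain_single, hsingle, map_one, map_one, mul_one]
          rfl
        · intro x
          rw [RingHom.comp_apply, MonoidAlgebra.mapDomainRingHom_apply,
            MonoidAlgebra.mapDomain_single, hsingle, map_one, map_one, one_mul,
            MonoidHom.inl_apply, hg, map_one, mul_one]
          rfl
      rw [← this]
      exact ⟨_, rfl⟩
    · refine ⟨_, hof (1, .sr 0) |>.trans ?_⟩
      rw [hg, map_one, map_one, one_mul]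
      show refl R * rot (f 0) = _
      rw [map_zero, rot_zero, mul_one]
    · intro i
      refine ⟨_, hof (1, .r i) |>.trans ?_⟩
      rw [hg, map_one, map_one, one_mul]
      show rot (f i) = _
      congr 1
      rw [← map_intCast f, ZMod.intCast_zmod_cast]
  have hcR : Nat.card R = Nat.card F ^ 3 := by
    rw [hR, card_MA, Nat.card_congr Multiplicative.toAdd, Nat.card_zmod]
  have hcW : Nat.card (W10 R) = Nat.card F ^ 30 := by
    rw [Nat.card_congr equivFun, Nat.card_fun, hcR, Nat.card_fin, ← pow_mul]
  have hF : 0 < Nat.card F := Nat.card_pos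
  have : Finite (W10 R) := Nat.finite_of_card_ne_zero (by rw [hcW]; positivity)
  have hcM : Nat.card (MonoidAlgebra F (Multiplicative (ZMod 3) × DihedralGroup 5))
      = Nat.card F ^ 30 := by
    rw [card_MA, Nat.card_prod, Nat.card_congr Multiplicative.toAdd, Nat.card_zmod,
      DihedralGroup.nat_card]
  have : Finite (MonoidAlgebra F (Multiplicative (ZMod 3) × DihedralGroup 5)) :=
    Nat.finite_of_card_ne_zero (by rw [hcM]; positivity)
  exact ⟨RingEquiv.ofBijective Φ (hsurj.bijective_of_nat_card_le (by rw [hcM, hcW]))⟩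

lemma jac_R (F : Type) [Field F] [Fintype F] (hchar : CharP F 5) :
    Ideal.jacobson (⊥ : Ideal (MonoidAlgebra F (Multiplicative (ZMod 3)))) = ⊥ := by
  have h5F : (5 : F) = 0 := by exact_mod_cast CharP.cast_eq_zero F 5
  have : NeZero (Nat.card (Multiplicative (ZMod 3)) : F) := by
    rw [Nat.card_congr Multiplicative.toAdd, Nat.card_zmod]
    refine ⟨fun h => ?_⟩
    push_cast at h
    exact one_ne_zero (α := F) (by linear_combination 2 * h - h5F)
  have : IsSemisimpleRing (MonoidAlgebra F (Multiplicative (ZMod 3))) := inferInstance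
  rw [Ideal.jacobson_bot, IsSemisimpleRing.jacobson_eq_bot]

variable {R : Type} [CommRing R]

/-- The group `1 + J` inside the units of `W10 R`. -/
def V0 (R : Type) [CommRing R] : Subgroup (W10 R)ˣ where
  carrier := {u | u.val.a0 = 1 ∧ u.val.d0 = 1}
  one_mem' := ⟨rfl, rfl⟩
  mul_mem' := by
    rintro x y ⟨h1, h2⟩ ⟨h3, h4⟩
    constructor <;> simp [*]
  inv_mem' := by
    rintro x ⟨h1, h2⟩
    have h := x.mul_inv
    have ha := congrArg W10.a0 h
    have hd := congrArg W10.d0 h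
    simp only [mul_def, one_def, h1, h2, one_mul] at ha hd
    exact ⟨ha, hd⟩

/-- Additive maps to `W10` landing in `1 + J` give maps to `V0`. -/
def mkHom {M : Type} [AddCommGroup M] (p : M → W10 R) (h0 : p 0 = 1)
    (hp : ∀ x y, p (x + y) = p x * p y) (h : ∀ x, (p x).a0 = 1 ∧ (p x).d0 = 1) :
    Multiplicative M →* V0 R :=
  (MonoidHom.toHomUnits (M := W10 R) (G := Multiplicative M)
    ⟨⟨fun x => p x.toAdd, h0⟩, fun x y => hp x.toAdd y.toAdd⟩).codRestrict (V0 R)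
    (fun x => h x.toAdd)

lemma mkHom_val {M : Type} [AddCommGroup M] (p : M → W10 R) (h0 : p 0 = 1)
    (hp : ∀ x y, p (x + y) = p x * p y) (h : ∀ x, (p x).a0 = 1 ∧ (p x).d0 = 1)
    (x : Multiplicative M) : (mkHom p h0 hp h x).val.val = p x.toAdd := rfl

lemma V0_ext {u v : V0 R} (h : u.val.val = v.val.val) : u = v := Subtype.ext (Units.ext h)

/-- The projection to the coordinate `c0`. -/
def fC (R : Type) [CommRing R] : V0 R →* Multiplicative R where
  toFun u := Multiplicative.ofAdd u.val.val.c0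
  map_one' := rfl
  map_mul' u v := by
    rw [← ofAdd_add]
    congr 1
    simp [u.2.2, v.2.1]

lemma c0_ker (u : (fC R).ker) : u.val.val.val.c0 = 0 := u.2

/-- The section of `fC`. -/
def gC (R : Type) [CommRing R] : Multiplicative R →* V0 R :=
  mkHom (fun c => ⟨1, 0, 0, 0, 0, c, 0, 1, 0, 0⟩) rfl
    (fun x y => by ext <;> simp) (fun x => ⟨rfl, rfl⟩)

/-- The projection of the kernel of `fC` to `R × R`. -/
def fB (h5 : (5 : R) = 0) : (fC R).ker →* Multiplicative (R × R) where
  toFun u := Multiplicative.ofAdd (3 * (u.val.val.val.a1 + u.val.val.val.d1), u.val.val.val.b0)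
  map_one' := by
    apply Multiplicative.toAdd.injective
    ext <;> simp
  map_mul' u v := by
    rw [← ofAdd_add]
    congr 1
    have h1 := u.1.2.1
    have h2 := u.1.2.2
    have h3 := v.1.2.1
    have h4 := v.1.2.2
    ext
    · simp [h1, h2, h3, h4, c0_ker]
      ring
    · simp [h1, h4]
      ring

/-- The section of `fB`. -/
def gB (h5 : (5 : R) = 0) : Multiplicative (R × R) →* (fC R).ker :=
  (mkHom (fun x : R × R => ⟨1, x.1, 3 * x.1 ^ 2, x.2, x.1 * x.2, 0, 0, 1, x.1, 3 * x.1 ^ 2⟩)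
    (by ext <;> simp)
    (fun x y => by
      have h : 3 * (x.1 + y.1) ^ 2 = 3 * x.1 ^ 2 + 3 * y.1 ^ 2 + x.1 * y.1 := by
        linear_combination (x.1 * y.1) * h5
      ext <;> simp <;> first | ring1 | linear_combination h)
    (fun x => ⟨rfl, rfl⟩)).codRestrict _ (fun x => rfl)

/-- The abelian normal subgroup. -/
def iA (h5 : (5 : R) = 0) : Multiplicative (Fin 5 → R) →* (fC R).ker :=
  (mkHom (fun x : Fin 5 → R => ⟨1, x 0, x 1 + 3 * x 0 ^ 2, 0, x 2, 0, x 3,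
      1, - x 0, x 4 + 3 * x 0 ^ 2⟩)
    (by ext <;> simp)
    (fun x y => by
      have h : 3 * (x 0 + y 0) ^ 2 = 3 * x 0 ^ 2 + 3 * y 0 ^ 2 + x 0 * y 0 := by
        linear_combination (x 0 * y 0) * h5
      ext <;> simp <;> first | ring1 | linear_combination h)
    (fun x => ⟨rfl, rfl⟩)).codRestrict _ (fun x => rfl)

lemma exists_split (k : ℕ) (h5 : (5 : R) = 0) (hc : Nat.card R = 5 ^ (3 * k)) :
    ∃ φ₁ : (Fin (6 * k) → Multiplicative (ZMod 5)) →*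
              MulAut (Fin (15 * k) → Multiplicative (ZMod 5)),
      ∃ φ₂ : (Fin (3 * k) → Multiplicative (ZMod 5)) →*
              MulAut ((Fin (15 * k) → Multiplicative (ZMod 5)) ⋊[φ₁]
                      (Fin (6 * k) → Multiplicative (ZMod 5))),
        Nonempty (V0 R ≃*
          ((Fin (15 * k) → Multiplicative (ZMod 5)) ⋊[φ₁]
              (Fin (6 * k) → Multiplicative (ZMod 5))) ⋊[φ₂]
            (Fin (3 * k) → Multiplicative (ZMod 5))) := by
  have h5R : ∀ x : R, 5 • x = 0 := fun x => by
    rw [nsmul_eq_mul]; push_cast; rw [h5, zero_mul]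
  obtain ⟨eC⟩ := elem_equiv R h5R (3 * k) hc
  obtain ⟨eB⟩ := elem_equiv (R × R) (fun x => Prod.ext (h5R _) (h5R _)) (6 * k) (by
    rw [Nat.card_prod, hc, ← pow_add]; congr 1; ring)
  obtain ⟨eA⟩ := elem_equiv (Fin 5 → R) (fun x => funext fun i => h5R _) (15 * k) (by
    rw [Nat.card_fun, hc, Nat.card_fin, ← pow_mul]; congr 1; ring)
  obtain ⟨φ₁, ⟨e₁⟩⟩ := split_equiv ((iA h5).comp eA.toMonoidHom)
    (eB.symm.toMonoidHom.comp (fB h5)) ((gB h5).comp eB.toMonoidHom) (by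
      rw [MonoidHom.coe_comp]
      refine Function.Injective.comp ?_ eA.injective
      intro x y h
      have h' : ∀ p : W10 R → R, p (iA h5 x).val.val.val = p (iA h5 y).val.val.val :=
        fun p => by rw [h]
      have g0 : x.toAdd 0 = y.toAdd 0 := h' W10.a1
      have g1 : x.toAdd 1 + 3 * x.toAdd 0 ^ 2 = y.toAdd 1 + 3 * y.toAdd 0 ^ 2 := h' W10.a2
      have g2 : x.toAdd 2 = y.toAdd 2 := h' W10.b1
      have g3 : x.toAdd 3 = y.toAdd 3 := h' W10.c1
      have g4 : x.toAdd 4 + 3 * x.toAdd 0 ^ 2 = y.toAdd 4 + 3 * y.toAdd 0 ^ 2 := h' W10.d2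
      rw [g0] at g1 g4
      apply Multiplicative.toAdd.injective
      ext i
      fin_cases i
      · exact g0
      · exact add_right_cancel g1
      · exact g2
      · exact g3
      · exact add_right_cancel g4)
    (by
      intro u hu
      have hu' : fB h5 u = 1 := eB.symm.injective (by rw [map_one]; exact hu)
      have hb : u.val.val.val.b0 = 0 := congrArg (fun z : Multiplicative (R × R) => z.toAdd.2) hu'
      have ha : 3 * (u.val.val.val.a1 + u.val.val.val.d1) = 0 :=
        congrArg (fun z : Multiplicative (R × R) => z.toAdd.1) hu'
      have hd : - u.val.val.val.a1 = u.val.val.val.d1 := by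
        linear_combination (u.val.val.val.a1 + u.val.val.val.d1) * h5 - 2 * ha
      obtain ⟨z, hz⟩ := eA.surjective (Multiplicative.ofAdd ![u.val.val.val.a1,
        u.val.val.val.a2 - 3 * u.val.val.val.a1 ^ 2, u.val.val.val.b1, u.val.val.val.c1,
        u.val.val.val.d2 - 3 * u.val.val.val.a1 ^ 2])
      refine ⟨z, ?_⟩
      apply Subtype.ext
      apply V0_ext
      show (iA h5 (eA z)).val.val.val = _
      rw [hz]
      refine (mkHom_val _ _ _ _ _).trans ?_
      ext
      · exact u.1.2.1.symm
      · rfl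
      · exact sub_add_cancel _ _
      · exact hb.symm
      · rfl
      · exact (c0_ker u).symm
      · rfl
      · exact u.1.2.2.symm
      · exact hd
      · exact sub_add_cancel _ _)
    (by
      intro n
      show eB.symm (fB h5 (iA h5 (eA n))) = 1
      rw [map_eq_one_iff _ eB.symm.injective]
      apply Multiplicative.toAdd.injective
      ext
      · show 3 * ((eA n).toAdd 0 + - (eA n).toAdd 0) = 0
        ring
      · rfl)
    (by
      intro q
      show eB.symm (fB h5 (gB h5 (eB q))) = q
      rw [MulEquiv.symm_apply_eq]
      apply Multiplicative.toAdd.injective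
      ext
      · show 3 * ((eB q).toAdd.1 + (eB q).toAdd.1) = (eB q).toAdd.1
        linear_combination (eB q).toAdd.1 * h5
      · rfl)
  refine ⟨φ₁, split_equiv ((fC R).ker.subtype.comp e₁.symm.toMonoidHom)
    (eC.symm.toMonoidHom.comp (fC R)) ((gC R).comp eC.toMonoidHom) ?_ ?_ ?_ ?_⟩
  · rw [MonoidHom.coe_comp]
    exact (Subgroup.subtype_injective _).comp e₁.symm.injective
  · intro u hu
    have hu' : fC R u = 1 := eC.symm.injective (by rw [map_one]; exact hu)
    exact ⟨e₁ ⟨u, hu'⟩, by simp⟩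
  · intro n
    show eC.symm (fC R (e₁.symm n).val) = 1
    rw [map_eq_one_iff _ eC.symm.injective]
    exact (e₁.symm n).2
  · intro q
    show eC.symm (fC R (gC R (eC q))) = q
    rw [MulEquiv.symm_apply_eq]
    rfl

lemma mem_jac_equiv {A B : Type} [Ring A] [Ring B] (e : A ≃+* B) (x : A) :
    x ∈ Ideal.jacobson (⊥ : Ideal A) ↔ e x ∈ Ideal.jacobson (⊥ : Ideal B) := by
  simp only [Ideal.mem_jacobson_iff, Ideal.mem_bot]
  constructor
  · intro h y
    obtain ⟨z, hz⟩ := h (e.symm y)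
    refine ⟨e z, ?_⟩
    have := congrArg e hz
    simpa only [map_sub, map_add, map_mul, map_one, map_zero, e.apply_symm_apply] using this
  · intro h y
    obtain ⟨z, hz⟩ := h (e y)
    refine ⟨e.symm z, e.injective ?_⟩
    simpa only [map_sub, map_add, map_mul, map_one, map_zero, e.apply_symm_apply] using hz

end Main

/-- For `F` a finite field with `5^k` elements and `G = C₃ × D₁₀`, the group
`V = 1 + J(FG)` is isomorphic to an iterated semidirect product
`(C₅^(15k) ⋊ C₅^(6k)) ⋊ C₅^(3k)`. -/
theorem stmt_14 (F : Type) [Field F] [Fintype F] (k : ℕ) (hk : 0 < k)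
    (hchar : CharP F 5) (hcard : Fintype.card F = 5 ^ k) :
    let G := Multiplicative (ZMod 3) × DihedralGroup 5
    ∃ H : Subgroup (MonoidAlgebra F G)ˣ,
      (∀ u : (MonoidAlgebra F G)ˣ,
        u ∈ H ↔ (u : MonoidAlgebra F G) - 1 ∈ Ideal.jacobson (⊥ : Ideal (MonoidAlgebra F G))) ∧
      ∃ φ₁ : (Fin (6 * k) → Multiplicative (ZMod 5)) →*
              MulAut (Fin (15 * k) → Multiplicative (ZMod 5)),
      ∃ φ₂ : (Fin (3 * k) → Multiplicative (ZMod 5)) →*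
              MulAut ((Fin (15 * k) → Multiplicative (ZMod 5)) ⋊[φ₁]
                      (Fin (6 * k) → Multiplicative (ZMod 5))),
        Nonempty (H ≃*
          ((Fin (15 * k) → Multiplicative (ZMod 5)) ⋊[φ₁]
              (Fin (6 * k) → Multiplicative (ZMod 5))) ⋊[φ₂]
            (Fin (3 * k) → Multiplicative (ZMod 5))) := by
  intro G
  obtain ⟨e⟩ := exists_equiv_s14 F hchar
  have h5 := five_R F hchar
  have hj := jac_R F hchar
  have hc : Nat.card (MonoidAlgebra F (Multiplicative (ZMod 3))) = 5 ^ (3 * k) := by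
    rw [card_MA, Nat.card_congr Multiplicative.toAdd, Nat.card_zmod, Nat.card_eq_fintype_card,
      hcard, ← pow_mul, mul_comm]
  obtain ⟨φ₁, φ₂, ⟨E⟩⟩ := exists_split k h5 hc
  let eu := (Units.mapEquiv e.toMulEquiv).symm
  refine ⟨(V0 _).map eu.toMonoidHom, ?_, φ₁, φ₂, ⟨(eu.subgroupMap (V0 _)).symm.trans E⟩⟩
  intro u
  rw [mem_jac_equiv e, W10.mem_jacobson hj]
  have : u ∈ (V0 _).map eu.toMonoidHom ↔ eu.symm u ∈ V0 _ := Subgroup.mem_map_equiv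
  rw [this]
  show (e u.val).a0 = 1 ∧ (e u.val).d0 = 1 ↔ _
  rw [map_sub, map_one, W10.sub_def, W10.one_def, sub_eq_zero, sub_eq_zero]
end
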